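/- In the silent-consensus wrapper: if some correct node receives at most f messages in round 1 (hence does not participate in the inner protocol), then no correct node receives n - f or more messages in round 1, so every correct node sets its input to 0 and sends nothing in round 2, and consequently every correct node outputs 0. -/

import Mathlib

section SilentWrapper

variable {V : Type*} {Faulty : Finset V}

/-- Consistent broadcasting by correct nodes in one round, where `recv v` is the set of nodes from
which `v` receives a message: a correct sender heard by one correct node is heard by all of them.
Faulty senders may address arbitrary subsets. -/
def ConsistentBroadcast (Faulty : Finset V) (recv : V → Finset V) : Prop :=
  ∀ ⦃u v w : V⦄, u ∉ Faulty → v ∉ Faulty → w ∉ Faulty → w ∈ recv u → w ∈ recv v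

theorem ConsistentBroadcast.card_recv_le_add_card_faulty {recv : V → Finset V}
    (hrecv : ConsistentBroadcast Faulty recv) {u v : V} (hu : u ∉ Faulty) (hv : v ∉ Faulty) :
    (recv u).card ≤ (recv v).card + Faulty.card := by
  classical
  have hcorrect : recv u \ Faulty ⊆ recv v := fun w hw =>
    have ⟨hmem, hw⟩ := Finset.mem_sdiff.mp hw
    hrecv hu hv hw hmem
  calc (recv u).card
      ≤ (recv u \ Faulty).card + Faulty.card := Finset.card_le_card_sdiff_add_card
    _ ≤ (recv v).card + Faulty.card := by gcongr

theorem ConsistentBroadcast.card_recv_le_two_mul {recv : V → Finset V} {f : ℕ}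
    (hrecv : ConsistentBroadcast Faulty recv) (hF : Faulty.card ≤ f)
    {v₀ : V} (hv₀ : v₀ ∉ Faulty) (hv₀card : (recv v₀).card ≤ f) {v : V} (hv : v ∉ Faulty) :
    (recv v).card ≤ 2 * f :=
  calc (recv v).card
      ≤ (recv v₀).card + Faulty.card := hrecv.card_recv_le_add_card_faulty hv hv₀
    _ ≤ f + f := add_le_add hv₀card hF
    _ = 2 * f := (two_mul f).symm

theorem silent_wrapper_nonparticipation_general {D : Type*} {f quorum : ℕ}
    (hquorum : 2 * f < quorum) (hF : Faulty.card ≤ f)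
    {recv1 recv2 : V → Finset V} {output : V → D} {d : D}
    (hrecv1 : ConsistentBroadcast Faulty recv1)
    (hrecv2 : ∀ v w : V, v ∉ Faulty → w ∉ Faulty → w ∈ recv2 v → quorum ≤ (recv1 w).card)
    (houtput : ∀ v : V, v ∉ Faulty → (recv2 v).card ≤ f → output v = d)
    {v₀ : V} (hv₀ : v₀ ∉ Faulty) (hv₀card : (recv1 v₀).card ≤ f) (v : V) (hv : v ∉ Faulty) :
    (recv1 v).card < quorum ∧ (∀ w : V, w ∉ Faulty → w ∉ recv2 v) ∧ output v = d := by
  have hbelow : ∀ w : V, w ∉ Faulty → (recv1 w).card < quorum := fun w hw =>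
    (hrecv1.card_recv_le_two_mul hF hv₀ hv₀card hw).trans_lt hquorum
  have hsilent : ∀ w : V, w ∉ Faulty → w ∉ recv2 v := fun w hw hmem =>
    (hbelow w hw).not_ge (hrecv2 v w hv hw hmem)
  have hfaulty : recv2 v ⊆ Faulty := fun w hmem =>
    by_contra fun hw => hsilent w hw hmem
  exact ⟨hbelow v hv, hsilent, houtput v hv ((Finset.card_le_card hfaulty).trans hF)⟩

end SilentWrapper

/-- If some correct node receives at most f round-1 messages, then no correct
node receives n - f or more round-1 messages, every correct node sends nothing
in round 2, and every correct node outputs 0 (false). -/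
theorem silent_wrapper_nonparticipation
    (n f : ℕ) (hnf : 3 * f < n)
    (Faulty : Finset (Fin n)) (hF : Faulty.card ≤ f)
    (input : Fin n → Bool)
    (recv1 recv2 : Fin n → Finset (Fin n))
    (output : Fin n → Bool)
    (hsend1 : ∀ v w : Fin n, v ∉ Faulty → w ∉ Faulty →
      (w ∈ recv1 v ↔ input w = true))
    (hsend2 : ∀ v w : Fin n, v ∉ Faulty → w ∉ Faulty →
      (w ∈ recv2 v ↔ (input w = true ∧ n - f ≤ (recv1 w).card)))
    (houtput : ∀ v : Fin n, v ∉ Faulty →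
      (recv2 v).card ≤ f → output v = false)
    -- some correct node receives at most f round-1 messages
    (v₀ : Fin n) (hv₀ : v₀ ∉ Faulty) (hv₀card : (recv1 v₀).card ≤ f) :
    ∀ v : Fin n, v ∉ Faulty →
      (recv1 v).card < n - f ∧
      (∀ w : Fin n, w ∉ Faulty → w ∉ recv2 v) ∧
      output v = false := by
  have hrecv1 : ConsistentBroadcast Faulty recv1 := fun u v w hu hv hw hmem =>
    (hsend1 v w hv hw).mpr ((hsend1 u w hu hw).mp hmem)
  exact silent_wrapper_nonparticipation_general (by omega : 2 * f < n - f) hF hrecv1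
    (fun v w hv hw hmem => ((hsend2 v w hv hw).mp hmem).2) houtput hv₀ hv₀card
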